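/- For all n ≥ 0, T_2(9n+4) ≡ 0 (mod 24). -/

import Mathlib

noncomputable def Tcount (ℓ k n : ℕ) : ℕ :=
  Nat.card {f : Fin k → Σ m : ℕ, Nat.Partition m //
    (∑ i, (f i).1) = n ∧ ∀ i, ∀ p ∈ (f i).2.parts, ¬ ℓ ∣ p}

/-!
Let `F` be the generating series of 2-regular partitions, `φ = ∑ (-1) ^ k * q ^ (k ^ 2)` and
`ψ = ∑ q ^ (2 * s ^ 2 + s)`, summed over `ℤ`. Gauss's product formulas for `φ` and `ψ` give
`F ^ 3 * φ = ψ`. Since `φ ≡ 1` modulo `2`, modulo `8` we have `φ ^ 4 ≡ 1` and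
`φ ^ 3 ≡ 3 * φ + 2 * φ(q ^ 2) - 4`, whence
`F ^ 3 ≡ F ^ 3 * φ ^ 4 = ψ * φ ^ 3 ≡ ψ * (3 * φ + 2 * φ(q ^ 2) - 4)`.

Let `3` divide `8 * N + 1` exactly once, as it does for `N = 9 * n + 4`. The coefficients of `q ^ N`
in `ψ` and `ψ * φ(q ^ 2)` vanish because `8 * N + 1` is not a sum of two squares. The one in
`ψ * φ` is a signed count of elements of norm `8 * N + 1` in `ℤ[√-2]`; exchanging the prime
`1 + √-2` with its conjugate reverses the signs, so it vanishes as well. This gives divisibility by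
`8`. Divisibility by `3` holds because `N` is prime to `3` and the derivative of the cube `F ^ 3` is
divisible by `3`.
-/

open Filter Finset PowerSeries PowerSeries.WithPiTopology Topology

section Congruences

theorem C_dvd_iff_forall_dvd_coeff {R : Type*} [CommSemiring R] (a : R) (f : R⟦X⟧) :
    C a ∣ f ↔ ∀ n, a ∣ coeff n f := by
  refine ⟨?_, fun h ↦ ?_⟩
  · rintro ⟨g, rfl⟩ n
    rw [coeff_C_mul]
    exact dvd_mul_right a _
  · choose g hg using h
    exact ⟨PowerSeries.mk g, by ext n; rw [coeff_C_mul, coeff_mk, hg]⟩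

-- The derivative of `f ^ m` is divisible by `m`, and its coefficients are `n * coeff n (f ^ m)`.
theorem natCast_dvd_coeff_pow {R : Type*} [CommRing R] (f : R⟦X⟧) {m n : ℕ}
    (h : m.Coprime n) : (m : R) ∣ coeff n (f ^ m) := by
  cases n with
  | zero => simp [(Nat.coprime_zero_right m).mp h]
  | succ n =>
    have coeff_deriv : coeff (n + 1) (f ^ m) * ((n + 1 : ℕ) : R) =
        m * coeff n (f ^ (m - 1) * derivative R f) := by
      rw [Nat.cast_succ, ← coeff_derivative, Derivation.leibniz_pow, smul_eq_mul, map_nsmul,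
        nsmul_eq_mul]
    exact (Nat.Coprime.cast h).dvd_of_dvd_mul_right (Dvd.intro _ coeff_deriv.symm)

theorem natCast_dvd_pow_sub_expand (p : ℕ) [Fact p.Prime] (f : ℤ⟦X⟧) :
    (p : ℤ⟦X⟧) ∣ f ^ p - expand p (NeZero.ne p) f := by
  have frobenius_eq : map (Int.castRingHom (ZMod p)) (f ^ p - expand p (NeZero.ne p) f) = 0 := by
    have h := MvPowerSeries.map_frobenius_expand p (NeZero.ne p)
      (f := map (Int.castRingHom (ZMod p)) f)
    rw [ZMod.frobenius_zmod, MvPowerSeries.map_id] at h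
    rw [map_sub, map_pow, map_expand, sub_eq_zero]
    exact h.symm
  rw [← map_natCast (C (R := ℤ)), C_dvd_iff_forall_dvd_coeff]
  intro n
  rw [← ZMod.intCast_zmod_eq_zero_iff_dvd, ← eq_intCast (Int.castRingHom (ZMod p)), ← coeff_map,
    frobenius_eq, map_zero]

theorem eight_dvd_pow_four_sub_one {A : Type*} [CommRing A] (g : A) :
    8 ∣ (1 + 2 * g) ^ 4 - 1 :=
  ⟨g + 3 * g ^ 2 + 4 * g ^ 3 + 2 * g ^ 4, by ring⟩

theorem eight_dvd_pow_three_sub {A : Type*} [CommRing A] {g g₂ : A} (h : 2 ∣ g ^ 2 - g₂) :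
    8 ∣ (1 + 2 * g) ^ 3 - (3 * (1 + 2 * g) + 2 * (1 + 2 * g₂) - 4) := by
  obtain ⟨r, hr⟩ := h
  exact ⟨g ^ 2 + g ^ 3 + r, by linear_combination 4 * hr⟩

end Congruences

section GenSeries

variable {ι κ R : Type*}

/-- The generating series `∑ i, w i * X ^ e i` of a weight `w` on a class `ι` graded by `e`. It is
meaningful when all fibres of `e` are finite, since a `finsum` with infinite support is `0`. -/
noncomputable def genSeries [Semiring R] (e : ι → ℕ) (w : ι → R) : R⟦X⟧ :=
  PowerSeries.mk fun n ↦ ∑ᶠ i ∈ e ⁻¹' {n}, w i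

theorem coeff_genSeries_eq_zero [Semiring R] {e : ι → ℕ} (w : ι → R) {n : ℕ}
    (hn : n ∉ Set.range e) : coeff n (genSeries e w) = 0 := by
  rw [genSeries, coeff_mk, Set.preimage_singleton_eq_empty.mpr hn, finsum_mem_empty]

theorem hasSum_genSeries [Semiring R] [TopologicalSpace R] {e : ι → ℕ}
    (he : ∀ n, (e ⁻¹' {n}).Finite) (w : ι → R) :
    HasSum (fun i ↦ monomial (e i) (w i)) (genSeries e w) := by
  rw [hasSum_iff_hasSum_coeff]
  intro n
  have coeff_eq : coeff n (genSeries e w) =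
      ∑ i ∈ (he n).toFinset, coeff n (monomial (e i) (w i)) := by
    rw [genSeries, coeff_mk, finsum_mem_eq_finite_toFinset_sum _ (he n)]
    refine sum_congr rfl fun i hi ↦ ?_
    rw [coeff_monomial, if_pos (by simpa [eq_comm] using hi)]
  rw [coeff_eq]
  refine hasSum_sum_of_ne_finset_zero fun i hi ↦ ?_
  rw [coeff_monomial, if_neg (by simpa [eq_comm] using hi)]

theorem finite_preimage_add_singleton {e : ι → ℕ} {e' : κ → ℕ} (he : ∀ n, (e ⁻¹' {n}).Finite)
    (he' : ∀ n, (e' ⁻¹' {n}).Finite) (n : ℕ) :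
    ((fun p : ι × κ ↦ e p.1 + e' p.2) ⁻¹' {n}).Finite := by
  have fibers : (fun p : ι × κ ↦ e p.1 + e' p.2) ⁻¹' {n} =
      Prod.map e e' ⁻¹' (antidiagonal n : Finset (ℕ × ℕ)) := by
    ext p
    simp
  rw [fibers]
  refine (antidiagonal n).finite_toSet.preimage' fun a _ ↦ ?_
  rw [← Prod.mk.eta (p := a), ← Set.singleton_prod_singleton, Set.preimage_prod_map_prod]
  exact (he _).prod (he' _)

theorem genSeries_mul_genSeries [CommSemiring R] {e : ι → ℕ} {e' : κ → ℕ}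
    (he : ∀ n, (e ⁻¹' {n}).Finite) (he' : ∀ n, (e' ⁻¹' {n}).Finite) (w : ι → R) (w' : κ → R) :
    genSeries e w * genSeries e' w' =
      genSeries (fun p : ι × κ ↦ e p.1 + e' p.2) fun p ↦ w p.1 * w' p.2 := by
  let _ : TopologicalSpace R := ⊥
  have _ : DiscreteTopology R := ⟨rfl⟩
  have _ : T3Space R⟦X⟧ := inferInstanceAs (T3Space ((Unit →₀ ℕ) → R))
  have hasSum_mul := hasSum_genSeries (finite_preimage_add_singleton he he')
    fun p ↦ w p.1 * w' p.2
  simp only [← monomial_mul_monomial] at hasSum_mul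
  exact (hasSum_genSeries he w).mul_eq (hasSum_genSeries he' w') hasSum_mul

theorem expand_genSeries [CommRing R] (m : ℕ) (hm : m ≠ 0) (e : ι → ℕ) (w : ι → R) :
    expand m hm (genSeries e w) = genSeries (fun i ↦ m * e i) w := by
  ext n
  by_cases hn : m ∣ n
  · obtain ⟨n, rfl⟩ := hn
    rw [coeff_expand_mul, genSeries, genSeries, coeff_mk, coeff_mk]
    simp only [Set.mem_preimage, Set.mem_singleton_iff, mul_right_inj' hm]
  · rw [coeff_expand_of_not_dvd m hm _ hn, coeff_genSeries_eq_zero]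
    rintro ⟨i, rfl⟩
    exact hn (dvd_mul_right m _)

end GenSeries

section FiniteGauss

variable {A : Type*} [CommRing A] (q : A)

-- A finite form, due to Shanks, of the Gauss identity
-- `∏ (1 - q ^ i) / (1 + q ^ i) = ∑ (-1) ^ k * q ^ (k ^ 2)`: `q ^ (n + 1)` divides the last sum.
theorem prod_one_add_pow_mul_sum_sq (n : ℕ) :
    (∏ i ∈ range n, (1 + q ^ (i + 1))) *
        (1 + 2 * ∑ s ∈ range n, (-1) ^ (s + 1) * q ^ (s + 1) ^ 2) =
      ∏ i ∈ range n, (1 - q ^ (i + 1)) +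
        2 * ∑ s ∈ range n, (-1) ^ (s + 1) * q ^ ((s + 1) * (n + 1)) *
          (∏ i ∈ range s, (1 + q ^ (i + 1))) * ∏ i ∈ Ico (s + 1) n, (1 - q ^ (i + 1)) := by
  induction n with
  | zero => simp
  | succ n ih =>
    let P (s : ℕ) : A := ∏ i ∈ range s, (1 + q ^ (i + 1))
    let M (s n : ℕ) : A := ∏ i ∈ Ico s n, (1 - q ^ (i + 1))
    let T (n s : ℕ) : A := (-1) ^ (s + 1) * q ^ ((s + 1) * (n + 1)) * P s * M (s + 1) n
    let U (s : ℕ) : A := (-1) ^ (s + 1) * q ^ ((s + 1) * (n + 1)) * P s * M s n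
    have telescope : ∀ s ∈ range n,
        T (n + 1) s = (1 + q ^ (n + 1)) * T n s + (U (s + 1) - U s) := by
      intro s hs
      have hs : s < n := mem_range.mp hs
      simp only [T, U, P, M, prod_range_succ, prod_Ico_succ_top (Nat.succ_le_of_lt hs),
        prod_eq_prod_Ico_succ_bot hs]
      ring
    have sum_T : ∑ s ∈ range (n + 1), T (n + 1) s =
        (1 + q ^ (n + 1)) * ∑ s ∈ range n, T n s + (U n - U 0) + T (n + 1) n := by
      rw [sum_range_succ, sum_congr rfl telescope, sum_add_distrib, ← mul_sum, sum_range_sub]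
    change P (n + 1) * _ = _ + 2 * ∑ s ∈ range (n + 1), T (n + 1) s
    change P n * _ = _ + 2 * ∑ s ∈ range n, T n s at ih
    have U_zero : U 0 = -q ^ (n + 1) * ∏ i ∈ range n, (1 - q ^ (i + 1)) := by
      simp [U, P, M]
    rw [sum_T, U_zero, prod_range_succ (fun i ↦ 1 - q ^ (i + 1)), sum_range_succ]
    simp only [T, U, P, M, prod_range_succ, Ico_self, prod_empty] at ih ⊢
    linear_combination (1 + q ^ (n + 1)) * ih

-- A finite form, due to Shanks, of the Gauss identity
-- `∏ (1 - q ^ (2 * i)) / (1 - q ^ (2 * i - 1)) = ∑ q ^ (m * (m + 1) / 2)`: on the right-hand side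
-- `q ^ (2 * n + 1)` divides every term except the one with `s = 0`.
theorem prod_one_sub_pow_mul_sum_triangular (n : ℕ) :
    (∏ i ∈ range n, (1 - q ^ (2 * i + 1))) *
        ∑ s ∈ range n, (q ^ (s * (2 * s + 1)) + q ^ ((s + 1) * (2 * s + 1))) =
      ∑ s ∈ range n, q ^ (s * (2 * n + 1)) *
        (∏ i ∈ range s, (1 - q ^ (2 * i + 1))) * ∏ i ∈ Ico s n, (1 - q ^ (2 * i + 2)) := by
  induction n with
  | zero => simp
  | succ n ih =>
    let O (s : ℕ) : A := ∏ i ∈ range s, (1 - q ^ (2 * i + 1))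
    let V (s n : ℕ) : A := ∏ i ∈ Ico s n, (1 - q ^ (2 * i + 2))
    let T (n s : ℕ) : A := q ^ (s * (2 * n + 1)) * O s * V s n
    let U (s : ℕ) : A := (1 - q ^ (2 * s)) * T n s
    have telescope : ∀ s ∈ range n,
        T (n + 1) s = (1 - q ^ (2 * n + 1)) * T n s + (U (s + 1) - U s) := by
      intro s hs
      have hs : s < n := mem_range.mp hs
      simp only [T, U, O, V, prod_range_succ, prod_Ico_succ_top hs.le,
        prod_eq_prod_Ico_succ_bot hs]
      ring
    have sum_T : ∑ s ∈ range (n + 1), T (n + 1) s =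
        (1 - q ^ (2 * n + 1)) * ∑ s ∈ range n, T n s + (U n - U 0) + T (n + 1) n := by
      rw [sum_range_succ, sum_congr rfl telescope, sum_add_distrib, ← mul_sum, sum_range_sub]
    change O (n + 1) * _ = ∑ s ∈ range (n + 1), T (n + 1) s
    change O n * _ = ∑ s ∈ range n, T n s at ih
    have U_zero : U 0 = 0 := by simp [U]
    rw [sum_T, U_zero, sum_range_succ]
    simp only [T, U, O, V, prod_range_succ, Ico_self, prod_empty,
      prod_Ico_succ_top le_rfl] at ih ⊢
    linear_combination (1 - q ^ (2 * n + 1)) * ih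

end FiniteGauss

section Theta

theorem finite_preimage_singleton_of_natAbs_le {e : ℤ → ℕ} (he : ∀ k, k.natAbs ≤ e k) (n : ℕ) :
    (e ⁻¹' {n}).Finite := by
  refine (Set.finite_Icc (-n : ℤ) n).subset fun k hk ↦ ?_
  have hk : e k = n := hk
  have := he k
  rw [Set.mem_Icc]
  omega

theorem abs_le_two_mul_sq_add (s : ℤ) : |s| ≤ 2 * s ^ 2 + s := by
  rcases abs_cases s with ⟨h, _⟩ | ⟨h, _⟩ <;> rw [h] <;> nlinarith

theorem natCast_toNat_two_mul_sq_add (s : ℤ) : ((2 * s ^ 2 + s).toNat : ℤ) = 2 * s ^ 2 + s :=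
  Int.toNat_of_nonneg ((abs_nonneg s).trans (abs_le_two_mul_sq_add s))

theorem finite_preimage_two_mul_sq_add_singleton (n : ℕ) :
    ((fun s : ℤ ↦ (2 * s ^ 2 + s).toNat) ⁻¹' {n}).Finite := by
  refine finite_preimage_singleton_of_natAbs_le (fun s ↦ ?_) n
  zify
  rw [natCast_toNat_two_mul_sq_add]
  exact abs_le_two_mul_sq_add s

theorem finite_preimage_natAbs_sq_singleton (n : ℕ) :
    ((fun k : ℤ ↦ k.natAbs ^ 2) ⁻¹' {n}).Finite :=
  finite_preimage_singleton_of_natAbs_le (fun _ ↦ Nat.le_self_pow two_ne_zero _) n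

variable (R : Type*) [CommRing R]

/-- Jacobi's theta series `∑ k : ℤ, (-1) ^ k * X ^ (k ^ 2)`, usually written `φ(-q)`. -/
noncomputable def squareTheta : R⟦X⟧ :=
  genSeries (fun k : ℤ ↦ k.natAbs ^ 2) fun k ↦ (-1) ^ k.natAbs

/-- The theta series `∑ m ≥ 0, X ^ (m * (m + 1) / 2)` of the triangular numbers, usually written
`ψ(q)`. It is summed over `s : ℤ` because `2 * s ^ 2 + s` takes every triangular number as a value
exactly once. -/
noncomputable def triangularTheta : R⟦X⟧ :=
  genSeries (fun s : ℤ ↦ (2 * s ^ 2 + s).toNat) fun _ ↦ 1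

theorem finite_preimage_sq_succ_singleton (n : ℕ) :
    ((fun s : ℕ ↦ (s + 1) ^ 2) ⁻¹' {n}).Finite :=
  (Set.finite_singleton n).preimage fun a _ b _ h ↦ by simpa using h

theorem squareTheta_eq_one_add_two_mul :
    squareTheta R = 1 + 2 * genSeries (fun s : ℕ ↦ (s + 1) ^ 2) fun s ↦ (-1) ^ (s + 1) := by
  let _ : TopologicalSpace R := ⊥
  have _ : DiscreteTopology R := ⟨rfl⟩
  have hasSum_half := hasSum_genSeries finite_preimage_sq_succ_singleton
    fun s ↦ (-1 : R) ^ (s + 1)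
  have hasSum_full := hasSum_genSeries finite_preimage_natAbs_sq_singleton
    fun k ↦ (-1 : R) ^ k.natAbs
  have natAbs_succ (s : ℕ) : ((s : ℤ) + 1).natAbs = s + 1 := rfl
  have hasSum_glued := HasSum.of_add_one_of_neg_add_one
    (f := fun k : ℤ ↦ monomial (k.natAbs ^ 2) ((-1 : R) ^ k.natAbs))
    (by simpa only [natAbs_succ] using hasSum_half)
    (by simpa only [Int.natAbs_neg, natAbs_succ] using hasSum_half)
  rw [squareTheta, hasSum_full.unique hasSum_glued, Int.natAbs_zero, zero_pow two_ne_zero, pow_zero,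
    monomial_zero_eq_C_apply, map_one]
  ring

end Theta

section Gauss

variable {R : Type*} [CommRing R] [TopologicalSpace R]

theorem tendsto_zero_of_X_pow_dvd {f : ℕ → R⟦X⟧} (hf : ∀ n, X ^ n ∣ f n) :
    Tendsto f atTop (𝓝 0) := by
  rw [tendsto_iff_coeff_tendsto]
  intro d
  rw [map_zero]
  refine tendsto_atTop_of_eventually_const fun n (hn : d + 1 ≤ n) ↦ ?_
  exact X_pow_dvd_iff.mp (hf n) d hn

theorem multipliable_one_add_of_X_pow_dvd {f : ℕ → R⟦X⟧} (hf : ∀ n, X ^ n ∣ f n) :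
    Multipliable (1 + f ·) :=
  multipliable_one_add_of_tendsto_order_atTop_nhds_top R <|
    tendsto_nhds_top_mono' ENat.tendsto_natCast_nhds_top fun n ↦
      nat_le_order _ _ (X_pow_dvd_iff.mp (hf n))

variable (R)

theorem multipliable_one_add_X_pow : Multipliable fun i ↦ (1 + X ^ (i + 1) : R⟦X⟧) :=
  multipliable_one_add_of_X_pow_dvd fun n ↦ pow_dvd_pow X n.le_succ

theorem multipliable_one_sub_X_pow_odd : Multipliable fun i ↦ (1 - X ^ (2 * i + 1) : R⟦X⟧) := by
  simpa only [sub_eq_add_neg] using multipliable_one_add_of_X_pow_dvd (R := R) fun n ↦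
    (pow_dvd_pow X (by omega)).neg_right

theorem multipliable_one_sub_X_pow_even : Multipliable fun i ↦ (1 - X ^ (2 * i + 2) : R⟦X⟧) := by
  simpa only [sub_eq_add_neg] using multipliable_one_add_of_X_pow_dvd (R := R) fun n ↦
    (pow_dvd_pow X (by omega)).neg_right

theorem tendsto_sum_squareTheta [IsTopologicalRing R] :
    Tendsto (fun n ↦ 1 + 2 * ∑ s ∈ range n, (-1) ^ (s + 1) * (X : R⟦X⟧) ^ (s + 1) ^ 2) atTop
      (𝓝 (squareTheta R)) := by
  have hasSum_half := hasSum_genSeries finite_preimage_sq_succ_singleton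
    fun s ↦ (-1 : R) ^ (s + 1)
  have monomial_eq (s : ℕ) : monomial ((s + 1) ^ 2) ((-1 : R) ^ (s + 1)) =
      (-1) ^ (s + 1) * X ^ (s + 1) ^ 2 := by
    rw [monomial_eq_C_mul_X_pow, map_pow, map_neg, map_one]
  simp only [monomial_eq] at hasSum_half
  rw [squareTheta_eq_one_add_two_mul]
  exact (hasSum_half.tendsto_sum_nat.const_mul 2).const_add 1

theorem tendsto_sum_triangularTheta :
    Tendsto (fun n ↦ ∑ s ∈ range n,
        ((X : R⟦X⟧) ^ (s * (2 * s + 1)) + X ^ ((s + 1) * (2 * s + 1)))) atTop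
      (𝓝 (triangularTheta R)) := by
  have hasSum_int := hasSum_genSeries finite_preimage_two_mul_sq_add_singleton fun _ ↦ (1 : R)
  have toNat_natCast (s : ℕ) : (2 * (s : ℤ) ^ 2 + s).toNat = s * (2 * s + 1) := by
    rw [← Int.toNat_natCast (s * (2 * s + 1))]
    push_cast
    ring_nf
  have toNat_neg (s : ℕ) :
      (2 * (-((s : ℤ) + 1)) ^ 2 + -((s : ℤ) + 1)).toNat = (s + 1) * (2 * s + 1) := by
    rw [← Int.toNat_natCast ((s + 1) * (2 * s + 1))]
    push_cast
    ring_nf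
  simpa only [← X_pow_eq, toNat_natCast, toNat_neg, triangularTheta]
    using hasSum_int.nat_add_neg_add_one.tendsto_sum_nat

variable [IsTopologicalRing R] [T2Space R]

theorem tprod_one_add_X_pow_mul_squareTheta :
    (∏' i, (1 + X ^ (i + 1) : R⟦X⟧)) * squareTheta R = ∏' i, (1 - X ^ (i + 1)) := by
  have error_tendsto : Tendsto (fun n ↦ ∑ s ∈ range n, (-1) ^ (s + 1) *
      (X : R⟦X⟧) ^ ((s + 1) * (n + 1)) * (∏ i ∈ range s, (1 + X ^ (i + 1))) *
        ∏ i ∈ Ico (s + 1) n, (1 - X ^ (i + 1))) atTop (𝓝 0) := by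
    refine tendsto_zero_of_X_pow_dvd fun n ↦ dvd_sum fun s _ ↦ ?_
    refine dvd_mul_of_dvd_left (dvd_mul_of_dvd_left (dvd_mul_of_dvd_right ?_ _) _) _
    exact pow_dvd_pow X (by nlinarith)
  have left_tendsto := (multipliable_one_add_X_pow R).hasProd.tendsto_prod_nat.mul
    (tendsto_sum_squareTheta R)
  have right_tendsto := (multipliable_one_sub_X_pow R).hasProd.tendsto_prod_nat.add
    (error_tendsto.const_mul 2)
  simp only [prod_one_add_pow_mul_sum_sq] at left_tendsto
  simpa only [mul_zero, add_zero] using tendsto_nhds_unique left_tendsto right_tendsto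

theorem tprod_one_sub_X_pow_odd_mul_triangularTheta :
    (∏' i, (1 - X ^ (2 * i + 1) : R⟦X⟧)) * triangularTheta R = ∏' i, (1 - X ^ (2 * i + 2)) := by
  have error_tendsto : Tendsto (fun n ↦ ∑ s ∈ range n, (X : R⟦X⟧) ^ ((s + 1) * (2 * (n + 1) + 1)) *
      (∏ i ∈ range (s + 1), (1 - X ^ (2 * i + 1))) *
        ∏ i ∈ Ico (s + 1) (n + 1), (1 - X ^ (2 * i + 2))) atTop (𝓝 0) := by
    refine tendsto_zero_of_X_pow_dvd fun n ↦ dvd_sum fun s _ ↦ ?_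
    refine dvd_mul_of_dvd_left (dvd_mul_of_dvd_left ?_ _) _
    exact pow_dvd_pow X (by nlinarith)
  have left_tendsto := (multipliable_one_sub_X_pow_odd R).hasProd.tendsto_prod_nat.mul
    (tendsto_sum_triangularTheta R)
  have right_tendsto := error_tendsto.add
    ((multipliable_one_sub_X_pow_even R).hasProd.tendsto_prod_nat.comp (tendsto_add_atTop_nat 1))
  simp only [prod_one_sub_pow_mul_sum_triangular] at left_tendsto
  rw [← tendsto_add_atTop_iff_nat 1] at left_tendsto
  simp only [sum_range_succ', zero_mul, pow_zero, one_mul, range_zero, prod_empty,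
    Nat.Ico_zero_eq_range] at left_tendsto
  rw [zero_add] at right_tendsto
  exact tendsto_nhds_unique left_tendsto right_tendsto

end Gauss

section RegularPartitions

/-- The generating series of the numbers of `ℓ`-regular partitions, those with no part divisible
by `ℓ`. -/
noncomputable def regularSeries (ℓ : ℕ) : ℤ⟦X⟧ :=
  PowerSeries.mk fun n ↦ (#(Nat.Partition.restricted n (¬ ℓ ∣ ·)) : ℤ)

theorem natCast_Tcount (ℓ k n : ℕ) : (Tcount ℓ k n : ℤ) = coeff n (regularSeries ℓ ^ k) := by
  let P (m : ℕ) : Type := {p : Nat.Partition m // ∀ x ∈ p.parts, ¬ ℓ ∣ x}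
  have finite_P (m : ℕ) : Finite (P m) := Subtype.finite
  have card_P (m : ℕ) : Nat.card (P m) = #(Nat.Partition.restricted m (¬ ℓ ∣ ·)) := by
    rw [Nat.card_eq_fintype_card, Fintype.card_subtype, Nat.Partition.restricted]
  let splitSizes : {f : Fin k → Σ m : ℕ, Nat.Partition m //
      (∑ i, (f i).1) = n ∧ ∀ i, ∀ p ∈ (f i).2.parts, ¬ ℓ ∣ p} ≃
      Σ l : {l : Fin k →₀ ℕ // l ∈ finsuppAntidiag univ n}, ∀ i, P (l.1 i) :=
    { toFun := fun f ↦ ⟨⟨Finsupp.equivFunOnFinite.symm fun i ↦ (f.1 i).1, by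
          simpa [mem_finsuppAntidiag] using f.2.1⟩, fun i ↦ ⟨(f.1 i).2, f.2.2 i⟩⟩
      invFun := fun g ↦ ⟨fun i ↦ ⟨g.1.1 i, (g.2 i).1⟩,
          (mem_finsuppAntidiag.mp g.1.2).1, fun i ↦ (g.2 i).2⟩ }
  rw [Tcount, Nat.card_congr splitSizes, Nat.card_sigma, ← Fin.prod_const k (regularSeries ℓ),
    coeff_prod]
  simp only [Nat.card_pi, card_P, regularSeries, coeff_mk, Nat.cast_sum, Nat.cast_prod]
  exact sum_coe_sort (finsuppAntidiag univ n)
    fun l ↦ ∏ i, (#(Nat.Partition.restricted (l i) (¬ ℓ ∣ ·)) : ℤ)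

theorem regularSeries_two_eq_tprod : regularSeries 2 = ∏' i, (1 + X ^ (i + 1)) := by
  rw [regularSeries,
    Nat.Partition.powerSeriesMk_card_restricted_eq_powerSeriesMk_card_countRestricted ℤ two_pos,
    Nat.Partition.powerSeriesMk_card_countRestricted_eq_tprod ℤ two_pos]
  exact tprod_congr fun i ↦ by
    simpa using sum_range_succ (fun j ↦ (X : ℤ⟦X⟧) ^ ((i + 1) * j)) 1

theorem regularSeries_two_pow_three_mul_squareTheta :
    regularSeries 2 ^ 3 * squareTheta ℤ = triangularTheta ℤ := by
  have tprod_sub_mul_tprod_add : (∏' i, (1 - X ^ (i + 1) : ℤ⟦X⟧)) * ∏' i, (1 + X ^ (i + 1)) =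
      ∏' i, (1 - X ^ (2 * i + 2)) := by
    rw [← (multipliable_one_sub_X_pow ℤ).tprod_mul (multipliable_one_add_X_pow ℤ)]
    exact tprod_congr fun i ↦ by ring
  have tprod_odd_mul_tprod_even : (∏' i, (1 - X ^ (2 * i + 1) : ℤ⟦X⟧)) *
      ∏' i, (1 - X ^ (2 * i + 2)) = ∏' i, (1 - X ^ (i + 1)) :=
    tprod_even_mul_odd (f := fun i ↦ 1 - X ^ (i + 1)) (multipliable_one_sub_X_pow_odd ℤ)
      (multipliable_one_sub_X_pow_even ℤ)
  have gauss_square := tprod_one_add_X_pow_mul_squareTheta ℤ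
  have gauss_triangular := tprod_one_sub_X_pow_odd_mul_triangularTheta ℤ
  have E_ne_zero := tprod_one_sub_X_pow_ne_zero ℤ
  rw [regularSeries_two_eq_tprod]
  set F : ℤ⟦X⟧ := ∏' i, (1 + X ^ (i + 1))
  set E : ℤ⟦X⟧ := ∏' i, (1 - X ^ (i + 1))
  set O : ℤ⟦X⟧ := ∏' i, (1 - X ^ (2 * i + 1))
  refine mul_left_cancel₀ E_ne_zero ?_
  calc E * (F ^ 3 * squareTheta ℤ) = (E * F) * F * (F * squareTheta ℤ) := by ring
    _ = (O * triangularTheta ℤ) * (E * F) := by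
      rw [gauss_square, tprod_sub_mul_tprod_add, gauss_triangular, mul_assoc, mul_comm F,
        tprod_sub_mul_tprod_add]
    _ = O * (E * F) * triangularTheta ℤ := by ring
    _ = E * triangularTheta ℤ := by
      rw [tprod_sub_mul_tprod_add, tprod_odd_mul_tprod_even]

theorem eight_dvd_regularSeries_two_pow_three_sub :
    8 ∣ regularSeries 2 ^ 3 - triangularTheta ℤ *
      (3 * squareTheta ℤ + 2 * expand 2 two_ne_zero (squareTheta ℤ) - 4) := by
  obtain ⟨g, hg⟩ : ∃ g, squareTheta ℤ = 1 + 2 * g := ⟨_, squareTheta_eq_one_add_two_mul ℤ⟩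
  have expand_eq : expand 2 two_ne_zero (squareTheta ℤ) = 1 + 2 * expand 2 two_ne_zero g := by
    rw [hg, map_add, map_mul, map_one, map_ofNat]
  have pow_four := eight_dvd_pow_four_sub_one g
  have pow_three := eight_dvd_pow_three_sub (natCast_dvd_pow_sub_expand 2 g)
  rw [← hg] at pow_four
  rw [← hg, ← expand_eq] at pow_three
  convert (pow_three.mul_left (triangularTheta ℤ)).sub (pow_four.mul_left (regularSeries 2 ^ 3))
    using 1
  rw [← regularSeries_two_pow_three_mul_squareTheta]
  ring

end RegularPartitions

section ThetaReps

/-- The pairs `(s, k)` that contribute to the coefficient of `X ^ N` in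
`triangularTheta ℤ * squareTheta ℤ`. -/
def thetaReps (N : ℕ) : Set (ℤ × ℤ) :=
  {p | 2 * p.1 ^ 2 + p.1 + p.2 ^ 2 = N}

theorem preimage_exponent_add_exponent_singleton (N : ℕ) :
    (fun p : ℤ × ℤ ↦ (2 * p.1 ^ 2 + p.1).toNat + p.2.natAbs ^ 2) ⁻¹' {N} = thetaReps N := by
  ext p
  rw [Set.mem_preimage, Set.mem_singleton_iff, thetaReps, Set.mem_ofPred_eq,
    ← Nat.cast_inj (R := ℤ), Nat.cast_add, natCast_toNat_two_mul_sq_add, Nat.cast_pow,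
    Int.natCast_natAbs, sq_abs]

theorem finite_thetaReps (N : ℕ) : (thetaReps N).Finite :=
  preimage_exponent_add_exponent_singleton N ▸ finite_preimage_add_singleton
    finite_preimage_two_mul_sq_add_singleton finite_preimage_natAbs_sq_singleton N

/-- An involution on the pairs `(s, k)` in `thetaReps N` with `3 ∣ s + 1 + k`. Encoding `(s, k)` as
`α = (4 * s + 1) + 2 * k * √-2`, of norm `8 * (2 * s ^ 2 + s + k ^ 2) + 1`, it is
`α ↦ π * conj α / conj π` with `π = 1 + √-2`, and the condition `3 ∣ s + 1 + k` says that `π ∣ α`,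
which makes both divisions exact. -/
def conjRotate (p : ℤ × ℤ) : ℤ × ℤ :=
  ((2 * p.2 - p.1 - 1) / 3, (4 * p.1 + 1 + p.2) / 3)

theorem conjRotate_eq {p : ℤ × ℤ} {t : ℤ} (h : p.1 + 1 + p.2 = 3 * t) :
    conjRotate p = (p.2 - t, 4 * t - 1 - p.2) :=
  Prod.ext (Int.ediv_eq_of_eq_mul_right three_ne_zero (by linarith))
    (Int.ediv_eq_of_eq_mul_right three_ne_zero (by linarith))

theorem mapsTo_conjRotate (N : ℕ) :
    Set.MapsTo conjRotate {p ∈ thetaReps N | 3 ∣ p.1 + 1 + p.2}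
      {p ∈ thetaReps N | 3 ∣ p.1 + 1 + p.2} := by
  rintro p ⟨hp, t, ht⟩
  rw [conjRotate_eq ht]
  refine ⟨?_, t, by ring⟩
  have hs : p.1 = 3 * t - 1 - p.2 := by linarith
  simp only [thetaReps, Set.mem_ofPred_eq, hs] at hp ⊢
  linear_combination hp

theorem conjRotate_conjRotate {p : ℤ × ℤ} (h : 3 ∣ p.1 + 1 + p.2) :
    conjRotate (conjRotate p) = p := by
  obtain ⟨t, ht⟩ := h
  rw [conjRotate_eq ht, conjRotate_eq (t := t) (by ring)]
  exact Prod.ext (by linarith) (by ring)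

theorem neg_one_pow_natAbs_conjRotate {p : ℤ × ℤ} (h : 3 ∣ p.1 + 1 + p.2) :
    (-1 : ℤ) ^ (conjRotate p).2.natAbs = -(-1) ^ p.2.natAbs := by
  obtain ⟨t, ht⟩ := h
  rw [conjRotate_eq ht]
  rcases p.2.even_or_odd with hk | hk
  · have hk' : Odd (4 * t - 1 - p.2) := by grind
    rw [(Int.natAbs_odd.mpr hk').neg_one_pow, (Int.natAbs_even.mpr hk).neg_one_pow]
  · have hk' : Even (4 * t - 1 - p.2) := by grind
    rw [(Int.natAbs_even.mpr hk').neg_one_pow, (Int.natAbs_odd.mpr hk).neg_one_pow, neg_neg]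

theorem finsum_thetaReps_of_three_dvd_add (N : ℕ) :
    ∑ᶠ p ∈ {p ∈ thetaReps N | 3 ∣ p.1 + 1 + p.2}, (-1 : ℤ) ^ p.2.natAbs = 0 := by
  have bijOn_conjRotate := Set.InvOn.bijOn
    ⟨fun p hp ↦ conjRotate_conjRotate hp.2, fun p hp ↦ conjRotate_conjRotate hp.2⟩
    (mapsTo_conjRotate N) (mapsTo_conjRotate N)
  have sum_eq_neg := finsum_mem_eq_of_bijOn (f := fun p ↦ -(-1 : ℤ) ^ p.2.natAbs)
    (g := fun p ↦ (-1 : ℤ) ^ p.2.natAbs) conjRotate bijOn_conjRotate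
    fun p hp ↦ (neg_one_pow_natAbs_conjRotate hp.2).symm
  rw [finsum_mem_neg_distrib _ ((finite_thetaReps N).subset (Set.sep_subset _ _))] at sum_eq_neg
  linarith

theorem finsum_thetaReps_of_three_dvd_sub (N : ℕ) :
    ∑ᶠ p ∈ {p ∈ thetaReps N | 3 ∣ p.1 + 1 - p.2}, (-1 : ℤ) ^ p.2.natAbs = 0 := by
  rw [← finsum_thetaReps_of_three_dvd_add N]
  refine finsum_mem_eq_of_bijOn (fun p ↦ (p.1, -p.2)) (Set.InvOn.bijOn (f' := fun p ↦ (p.1, -p.2))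
    ⟨fun p _ ↦ by simp, fun p _ ↦ by simp⟩ ?_ ?_) fun p _ ↦ by simp
  all_goals
    intro p hp
    simpa [thetaReps, sub_eq_add_neg] using hp

theorem finsum_thetaReps_eq_zero {N : ℕ} (h3 : 3 ∣ 8 * N + 1) (h9 : ¬ 9 ∣ 8 * N + 1) :
    ∑ᶠ p ∈ thetaReps N, (-1 : ℤ) ^ p.2.natAbs = 0 := by
  zify at h3 h9
  have split : thetaReps N = {p ∈ thetaReps N | 3 ∣ p.1 + 1 + p.2} ∪
      {p ∈ thetaReps N | 3 ∣ p.1 + 1 - p.2} := by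
    rw [← Set.sep_or, eq_comm, Set.sep_eq_self_iff_mem_true]
    intro p hp
    refine Int.prime_three.dvd_or_dvd ?_
    have eq_sub : (p.1 + 1 + p.2) * (p.1 + 1 - p.2) =
        8 * N + 1 - 3 * (5 * p.1 ^ 2 + 2 * p.1 + 3 * p.2 ^ 2) := by
      rw [← show _ = (N : ℤ) from hp]
      ring
    rw [eq_sub]
    exact h3.sub (dvd_mul_right 3 _)
  have disjoint : Disjoint {p ∈ thetaReps N | 3 ∣ p.1 + 1 + p.2}
      {p ∈ thetaReps N | 3 ∣ p.1 + 1 - p.2} := by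
    rw [Set.disjoint_left]
    rintro p ⟨hp, h_add⟩ ⟨-, h_sub⟩
    obtain ⟨a, ha⟩ : 3 ∣ p.2 := by omega
    obtain ⟨b, hb⟩ : 3 ∣ 4 * p.1 + 1 := by omega
    refine h9 ⟨b ^ 2 + 8 * a ^ 2, ?_⟩
    rw [← show _ = (N : ℤ) from hp]
    linear_combination (4 * p.1 + 1 + 3 * b) * hb + 8 * (p.2 + 3 * a) * ha
  rw [split, finsum_mem_union disjoint ((finite_thetaReps N).subset (Set.sep_subset _ _))
    ((finite_thetaReps N).subset (Set.sep_subset _ _)), finsum_thetaReps_of_three_dvd_add N,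
    finsum_thetaReps_of_three_dvd_sub N, add_zero]

end ThetaReps

section Coefficients

variable {N : ℕ}

theorem coeff_triangularTheta_mul_squareTheta_eq_zero (h3 : 3 ∣ 8 * N + 1)
    (h9 : ¬ 9 ∣ 8 * N + 1) : coeff N (triangularTheta ℤ * squareTheta ℤ) = 0 := by
  rw [triangularTheta, squareTheta, genSeries_mul_genSeries
    finite_preimage_two_mul_sq_add_singleton finite_preimage_natAbs_sq_singleton, genSeries,
    coeff_mk, preimage_exponent_add_exponent_singleton]
  simp only [one_mul]
  exact finsum_thetaReps_eq_zero h3 h9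

theorem sq_dvd_sq_add_sq_of_mod_four_eq_three {p : ℕ} [Fact p.Prime] (hp : p % 4 = 3) {a b : ℤ}
    (h : (p : ℤ) ∣ a ^ 2 + b ^ 2) : (p : ℤ) ^ 2 ∣ a ^ 2 + b ^ 2 := by
  have dvd_b : (p : ℤ) ∣ b := by
    rw [← ZMod.intCast_zmod_eq_zero_iff_dvd] at h ⊢
    push_cast at h
    by_contra hb
    exact ZMod.mod_four_ne_three_of_sq_eq_neg_sq' hb (eq_neg_of_add_eq_zero_left h) hp
  have dvd_a : (p : ℤ) ∣ a := (Nat.prime_iff_prime_int.mp Fact.out).dvd_of_dvd_pow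
    ((dvd_add_left (dvd_pow dvd_b two_ne_zero)).mp h)
  exact dvd_add (pow_dvd_pow_of_dvd dvd_a 2) (pow_dvd_pow_of_dvd dvd_b 2)

theorem sq_add_sq_ne_eight_mul_add_one (h3 : 3 ∣ 8 * N + 1) (h9 : ¬ 9 ∣ 8 * N + 1) (a b : ℤ) :
    a ^ 2 + b ^ 2 ≠ 8 * N + 1 := by
  intro h
  zify at h3 h9
  rw [← h] at h3 h9
  exact h9 (sq_dvd_sq_add_sq_of_mod_four_eq_three (p := 3) rfl h3)

theorem coeff_triangularTheta_eq_zero (h3 : 3 ∣ 8 * N + 1) (h9 : ¬ 9 ∣ 8 * N + 1) :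
    coeff N (triangularTheta ℤ) = 0 := by
  refine coeff_genSeries_eq_zero _ ?_
  rintro ⟨s, rfl⟩
  refine sq_add_sq_ne_eight_mul_add_one h3 h9 (4 * s + 1) 0 ?_
  rw [natCast_toNat_two_mul_sq_add]
  ring

theorem coeff_triangularTheta_mul_expand_squareTheta_eq_zero (h3 : 3 ∣ 8 * N + 1)
    (h9 : ¬ 9 ∣ 8 * N + 1) :
    coeff N (triangularTheta ℤ * expand 2 two_ne_zero (squareTheta ℤ)) = 0 := by
  have finite_preimage_two_mul_sq (n : ℕ) :
      ((fun k : ℤ ↦ 2 * k.natAbs ^ 2) ⁻¹' {n}).Finite :=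
    finite_preimage_singleton_of_natAbs_le (fun k ↦ by nlinarith) n
  rw [triangularTheta, squareTheta, expand_genSeries, genSeries_mul_genSeries
    finite_preimage_two_mul_sq_add_singleton finite_preimage_two_mul_sq]
  refine coeff_genSeries_eq_zero _ ?_
  rintro ⟨⟨s, k⟩, rfl⟩
  refine sq_add_sq_ne_eight_mul_add_one h3 h9 (4 * s + 1) (4 * k) ?_
  push_cast [natCast_toNat_two_mul_sq_add, sq_abs]
  ring

end Coefficients

theorem eight_dvd_coeff_regularSeries_two_pow_three {N : ℕ} (h3 : 3 ∣ 8 * N + 1)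
    (h9 : ¬ 9 ∣ 8 * N + 1) : 8 ∣ coeff N (regularSeries 2 ^ 3) := by
  have congruence := eight_dvd_regularSeries_two_pow_three_sub
  rw [← map_ofNat (C (R := ℤ)) 8, C_dvd_iff_forall_dvd_coeff] at congruence
  have coeff_eq : coeff N (triangularTheta ℤ *
      (3 * squareTheta ℤ + 2 * expand 2 two_ne_zero (squareTheta ℤ) - 4)) = 0 := by
    rw [show triangularTheta ℤ *
        (3 * squareTheta ℤ + 2 * expand 2 two_ne_zero (squareTheta ℤ) - 4) =
        C 3 * (triangularTheta ℤ * squareTheta ℤ) +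
          C 2 * (triangularTheta ℤ * expand 2 two_ne_zero (squareTheta ℤ)) -
          C 4 * triangularTheta ℤ by simp only [map_ofNat]; ring]
    simp only [map_add, map_sub, coeff_C_mul, coeff_triangularTheta_eq_zero h3 h9,
      coeff_triangularTheta_mul_squareTheta_eq_zero h3 h9,
      coeff_triangularTheta_mul_expand_squareTheta_eq_zero h3 h9, mul_zero, add_zero, sub_zero]
  simpa only [map_sub, coeff_eq, sub_zero] using congruence N

theorem stmt3_general {N : ℕ} (h3 : 3 ∣ 8 * N + 1) (h9 : ¬ 9 ∣ 8 * N + 1) :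
    24 ∣ Tcount 2 3 N := by
  have coprime : Nat.Coprime 3 N := Nat.prime_three.coprime_iff_not_dvd.mpr (by omega)
  have three_dvd := natCast_dvd_coeff_pow (regularSeries 2) coprime
  have eight_dvd := eight_dvd_coeff_regularSeries_two_pow_three h3 h9
  rw [← natCast_Tcount] at three_dvd eight_dvd
  norm_cast at three_dvd eight_dvd
  exact Nat.Coprime.mul_dvd_of_dvd_of_dvd (by norm_num : Nat.Coprime 3 8) three_dvd eight_dvd

theorem stmt3 (n : ℕ) : 24 ∣ Tcount 2 3 (9 * n + 4) :=
  stmt3_general (by omega) (by omega)
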